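/- Fix a positive integer $m$, $0<p,q<\infty$, and $1<\alpha,\beta<\infty$. For each positive integer $n$ let $p_{1,n}(\mathbf{z})=\frac{1}{\sqrt{n}}\sum_{i=1}^n z_i$. Then $\lim_{n\to\infty}\frac{\|p_{1,n}^m\|_{A_\beta^q(\mathbb{D}^n)}}{\|p_{1,n}^m\|_{A_\alpha^p(\mathbb{D}^n)}}=\left(\sqrt{\frac{\alpha}{\beta}}\right)^m\frac{\Gamma\left(\frac{qm}{2}+1\right)^{1/q}}{\Gamma\left(\frac{pm}{2}+1\right)^{1/p}}$. -/

import Mathlib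

open MeasureTheory Metric Filter

/-- The weighted Bergman measure `dA_α(z) = (α-1)(1-|z|²)^(α-2) dA(z)` on the unit disk,
where `dA = dx dy / π` is the normalized area measure. -/
noncomputable def bergmanMeasure (α : ℝ) : Measure ℂ :=
  ((volume : Measure ℂ).restrict (ball (0 : ℂ) 1)).withDensity
    fun z => ENNReal.ofReal ((α - 1) * (1 - ‖z‖ ^ 2) ^ (α - 2) / Real.pi)

/-- The product Bergman measure `dA_α(z₁) ⋯ dA_α(zₙ)` on the polydisc. -/
noncomputable def bergmanMeasurePi (n : ℕ) (α : ℝ) : Measure (Fin n → ℂ) :=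
  Measure.pi fun _ => bergmanMeasure α

open scoped Topology

/-- Moments pass to the limit under weak convergence when the second moments stay bounded. -/
lemma tendsto_integral_of_tendsto_of_integral_sq_le {E : Type*} [TopologicalSpace E]
    [MeasurableSpace E] [OpensMeasurableSpace E] {ν : ℕ → ProbabilityMeasure E}
    {ν₀ : ProbabilityMeasure E} (hν : Tendsto ν atTop (𝓝 ν₀)) {f : E → ℝ} (hf : Continuous f)
    (hf0 : ∀ x, 0 ≤ f x) {C : ℝ}
    (hint : ∀ n, Integrable (fun x => f x ^ 2) (ν n : Measure E))
    (hint₀ : Integrable (fun x => f x ^ 2) (ν₀ : Measure E))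
    (hC : ∀ n, ∫ x, f x ^ 2 ∂(ν n : Measure E) ≤ C)
    (hC₀ : ∫ x, f x ^ 2 ∂(ν₀ : Measure E) ≤ C) :
    Tendsto (fun n => ∫ x, f x ∂(ν n : Measure E)) atTop (𝓝 (∫ x, f x ∂(ν₀ : Measure E))) := by
  have trunc : ∀ (M : ℝ), 0 < M → ∀ (μ : ProbabilityMeasure E),
      Integrable (fun x => f x ^ 2) (μ : Measure E) → ∫ x, f x ^ 2 ∂(μ : Measure E) ≤ C →
      |∫ x, f x ∂(μ : Measure E) - ∫ x, min (f x) M ∂(μ : Measure E)| ≤ C / M := by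
    intro M hM μ hi hc
    have hfi : Integrable f (μ : Measure E) := by
      refine (hi.add (integrable_const (1 : ℝ))).mono' (hf.measurable.aestronglyMeasurable) ?_
      refine .of_forall fun x => ?_
      rw [Real.norm_of_nonneg (hf0 x)]
      simp only [Pi.add_apply]
      nlinarith [sq_nonneg (f x - 1), hf0 x]
    have hmi : Integrable (fun x => min (f x) M) (μ : Measure E) := by
      refine hfi.mono' ((hf.min continuous_const).measurable.aestronglyMeasurable) ?_
      refine .of_forall fun x => ?_
      rw [Real.norm_of_nonneg (le_min (hf0 x) hM.le)]
      exact min_le_left _ _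
    rw [← integral_sub hfi hmi, abs_of_nonneg
      (integral_nonneg fun x => sub_nonneg.2 (min_le_left _ _))]
    calc ∫ x, f x - min (f x) M ∂(μ : Measure E) ≤ ∫ x, f x ^ 2 / M ∂(μ : Measure E) := by
          refine integral_mono (hfi.sub hmi) (hi.div_const M) fun x => ?_
          simp only
          rw [le_div_iff₀ hM]
          rcases le_total (f x) M with h | h
          · simp only [min_eq_left h, sub_self, zero_mul]; positivity
          · rw [min_eq_right h]; nlinarith [hf0 x]
      _ = (∫ x, f x ^ 2 ∂(μ : Measure E)) / M := integral_div _ _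
      _ ≤ C / M := by gcongr
  have hCnn : 0 ≤ C := (integral_nonneg fun x => sq_nonneg (f x)).trans hC₀
  rw [Metric.tendsto_atTop]
  intro ε hε
  obtain ⟨M, hM, hMε⟩ : ∃ M : ℝ, 0 < M ∧ C / M < ε / 3 := by
    refine ⟨(C + 1) / (ε / 3), by positivity, ?_⟩
    rw [div_div_eq_mul_div, div_lt_iff₀ (by positivity)]
    nlinarith
  have hb : ∀ x y, dist (min (f x) M) (min (f y) M) ≤ M := by
    intro x y
    rw [Real.dist_eq, abs_le]
    have h1 := min_le_right (f x) M
    have h2 := min_le_right (f y) M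
    have h3 := le_min (hf0 x) hM.le
    have h4 := le_min (hf0 y) hM.le
    constructor <;> linarith
  let g : BoundedContinuousFunction E ℝ :=
    ⟨⟨fun x => min (f x) M, hf.min continuous_const⟩, M, hb⟩
  have hg := (ProbabilityMeasure.tendsto_iff_forall_integral_tendsto.1 hν) g
  obtain ⟨N, hN⟩ := (Metric.tendsto_atTop.1 hg) (ε / 3) (by positivity)
  refine ⟨N, fun n hn => ?_⟩
  have h1 := trunc M hM (ν n) (hint n) (hC n)
  have h2 := trunc M hM ν₀ hint₀ hC₀
  have h3 : |∫ x, min (f x) M ∂(ν n : Measure E) - ∫ x, min (f x) M ∂(ν₀ : Measure E)| < ε / 3 :=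
    hN n hn
  rw [Real.dist_eq]
  rw [abs_le] at h1 h2
  rw [abs_lt] at h3 ⊢
  constructor <;> linarith [h1.1, h1.2, h2.1, h2.2, h3.1, h3.2]

lemma measurable_bergman_density (α : ℝ) :
    Measurable fun z : ℂ => (α - 1) * (1 - ‖z‖ ^ 2) ^ (α - 2) / Real.pi := by
  fun_prop

lemma integral_bergmanMeasure {E : Type*} [NormedAddCommGroup E] [NormedSpace ℝ E] {α : ℝ}
    (hα : 1 < α) (f : ℂ → E) :
    ∫ z, f z ∂(bergmanMeasure α) =
      ∫ z in ball (0 : ℂ) 1, ((α - 1) * (1 - ‖z‖ ^ 2) ^ (α - 2) / Real.pi) • f z := by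
  rw [bergmanMeasure, integral_withDensity_eq_integral_toReal_smul
    (measurable_bergman_density α).ennreal_ofReal (by simp)]
  refine setIntegral_congr_fun measurableSet_ball fun z hz => ?_
  have hz' : ‖z‖ < 1 := by simpa using hz
  have : 0 ≤ 1 - ‖z‖ ^ 2 := by nlinarith [norm_nonneg z]
  have : 0 ≤ α - 1 := by linarith
  rw [ENNReal.toReal_ofReal (by positivity)]

lemma integral_bergmanMeasure_norm {α : ℝ} (hα : 1 < α) (f : ℝ → ℝ) :
    ∫ z, f ‖z‖ ∂(bergmanMeasure α) =
      ∫ y in (0 : ℝ)..1, 2 * (α - 1) * y * (1 - y ^ 2) ^ (α - 2) * f y := by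
  classical
  rw [integral_bergmanMeasure hα, ← integral_indicator measurableSet_ball]
  have h : (ball (0 : ℂ) 1).indicator
      (fun z => ((α - 1) * (1 - ‖z‖ ^ 2) ^ (α - 2) / Real.pi) • f ‖z‖) =
      fun z => (Set.Iio (1 : ℝ)).indicator
        (fun y => ((α - 1) * (1 - y ^ 2) ^ (α - 2) / Real.pi) * f y) ‖z‖ := by
    ext z
    simp [Set.indicator_apply]
  rw [h, integral_fun_norm_addHaar, intervalIntegral.integral_of_le zero_le_one,
    integral_Ioc_eq_integral_Ioo, ← integral_indicator measurableSet_Ioi,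
    ← integral_indicator measurableSet_Ioo, nsmul_eq_mul, smul_eq_mul, ← mul_assoc,
    ← integral_const_mul]
  congr 1
  ext y
  simp only [Complex.finrank_real_complex, Set.indicator_apply, Set.mem_Ioi, Set.mem_Iio,
    Set.mem_Ioo, Measure.real, Complex.volume_ball]
  by_cases h0 : 0 < y <;> by_cases h1 : y < 1 <;> simp [h0, h1]
  field_simp

lemma intervalIntegral_eq_sub_of_deriv_nonneg {F f : ℝ → ℝ}
    (hc : ContinuousOn F (Set.Icc 0 1)) (hd : ∀ x ∈ Set.Ioo (0 : ℝ) 1, HasDerivAt F (f x) x)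
    (h0 : ∀ x ∈ Set.Ioo (0 : ℝ) 1, 0 ≤ f x) : ∫ x in (0 : ℝ)..1, f x = F 1 - F 0 :=
  intervalIntegral.integral_eq_sub_of_hasDerivAt_of_le zero_le_one hc hd
    ((intervalIntegrable_iff_integrableOn_Ioc_of_le zero_le_one).2
      (intervalIntegral.integrableOn_deriv_of_nonneg hc hd h0))

lemma hasDerivAt_one_sub_sq_rpow {x : ℝ} (hx : x ∈ Set.Ioo (0 : ℝ) 1) (s : ℝ) :
    HasDerivAt (fun y : ℝ => (1 - y ^ 2) ^ s) (-(2 * s * x * (1 - x ^ 2) ^ (s - 1))) x := by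
  have hpos : 1 - x ^ 2 ≠ 0 := by nlinarith [hx.1, hx.2]
  have h := (((hasDerivAt_id x).pow 2).const_sub 1).rpow_const (p := s) (Or.inl hpos)
  simp at h
  convert h using 1
  ring

lemma isProbabilityMeasure_bergmanMeasure {α : ℝ} (hα : 1 < α) :
    IsProbabilityMeasure (bergmanMeasure α) := by
  have h := integral_bergmanMeasure_norm hα fun _ => 1
  rw [intervalIntegral_eq_sub_of_deriv_nonneg (F := fun y => -(1 - y ^ 2) ^ (α - 1))] at h
  · rw [integral_const, smul_eq_mul, mul_one] at h
    constructor
    rw [← ENNReal.toReal_eq_one_iff]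
    simpa [Real.zero_rpow (by linarith : α - 1 ≠ 0), Measure.real] using h
  · refine ContinuousOn.neg (ContinuousOn.rpow_const (by fun_prop) fun x _ => Or.inr ?_)
    linarith
  · intro x hx
    refine (hasDerivAt_one_sub_sq_rpow hx (α - 1)).neg.congr_deriv ?_
    rw [show α - 1 - 1 = α - 2 by ring]; ring
  · intro x hx
    have h1 : 0 ≤ 1 - x ^ 2 := by nlinarith [hx.1, hx.2]
    have h2 : 0 ≤ α - 1 := by linarith
    have h3 := hx.1.le
    positivity

lemma integral_norm_sq_bergmanMeasure {α : ℝ} (hα : 1 < α) :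
    ∫ z, ‖z‖ ^ 2 ∂(bergmanMeasure α) = 1 / α := by
  have h := integral_bergmanMeasure_norm hα fun y => y ^ 2
  rw [h, intervalIntegral_eq_sub_of_deriv_nonneg
    (F := fun y => (α - 1) / α * (1 - y ^ 2) ^ α - (1 - y ^ 2) ^ (α - 1))]
  · have : α ≠ 0 := by linarith
    simp [Real.zero_rpow (by linarith : α - 1 ≠ 0), Real.zero_rpow this]
    field_simp
    ring
  · refine ContinuousOn.sub (ContinuousOn.mul continuousOn_const
      (ContinuousOn.rpow_const (by fun_prop) fun x _ => Or.inr ?_))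
      (ContinuousOn.rpow_const (by fun_prop) fun x _ => Or.inr ?_) <;> linarith
  · intro x hx
    refine (((hasDerivAt_one_sub_sq_rpow hx α).const_mul ((α - 1) / α)).sub
      (hasDerivAt_one_sub_sq_rpow hx (α - 1))).congr_deriv ?_
    have hpos : 1 - x ^ 2 ≠ 0 := by nlinarith [hx.1, hx.2]
    have : α ≠ 0 := by linarith
    rw [show α - 1 = α - 2 + 1 by ring, Real.rpow_add_one hpos, show α - 2 + 1 - 1 = α - 2 by ring]
    field_simp
    ring
  · intro x hx
    have h1 : 0 ≤ 1 - x ^ 2 := by nlinarith [hx.1, hx.2]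
    have h2 : 0 ≤ α - 1 := by linarith
    have h3 := hx.1.le
    positivity

lemma ae_norm_lt_one_bergmanMeasure (α : ℝ) : ∀ᵐ z ∂(bergmanMeasure α), ‖z‖ < 1 := by
  refine (withDensity_absolutelyContinuous _ _).ae_le ?_
  filter_upwards [ae_restrict_mem measurableSet_ball] with z hz
  simpa using hz

/-- The Bergman measure is invariant under rotations. -/
lemma integral_bergmanMeasure_comp_mul {α : ℝ} (hα : 1 < α) {w : ℂ} (hw : ‖w‖ = 1)
    (f : ℂ → ℝ) : ∫ z, f (w * z) ∂(bergmanMeasure α) = ∫ z, f z ∂(bergmanMeasure α) := by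
  classical
  let e : ℂ ≃ₗᵢ[ℝ] ℂ := rotation ⟨w, by simpa [Submonoid.unitSphere] using hw⟩
  have he : ∀ z, e z = w * z := fun z => rfl
  rw [integral_bergmanMeasure hα, integral_bergmanMeasure hα,
    ← integral_indicator measurableSet_ball, ← integral_indicator measurableSet_ball]
  conv_rhs => rw [← e.measurePreserving.integral_comp e.toHomeomorph.measurableEmbedding]
  congr 1
  ext z
  simp [Set.indicator_apply, he, hw]

lemma integral_inner_bergmanMeasure {α : ℝ} (hα : 1 < α) (t : ℂ) :
    ∫ z, inner ℝ z t ∂(bergmanMeasure α) = 0 := by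
  have h := integral_bergmanMeasure_comp_mul hα (w := -1) (by simp) fun z => inner ℝ z t
  simp only [neg_mul, one_mul, inner_neg_left, integral_neg] at h
  linarith

lemma integrable_inner_sq_bergmanMeasure {α : ℝ} (hα : 1 < α) (t : ℂ) :
    Integrable (fun z : ℂ => inner ℝ z t ^ 2) (bergmanMeasure α) := by
  have := isProbabilityMeasure_bergmanMeasure hα
  refine Integrable.of_bound (by fun_prop) (‖t‖ ^ 2) ?_
  filter_upwards [ae_norm_lt_one_bergmanMeasure α] with z hz
  rw [norm_pow]
  gcongr
  exact (norm_inner_le_norm z t).trans (mul_le_of_le_one_left (norm_nonneg t) hz.le)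

lemma integral_inner_sq_bergmanMeasure {α : ℝ} (hα : 1 < α) (t : ℂ) :
    ∫ z, inner ℝ z t ^ 2 ∂(bergmanMeasure α) = ‖t‖ ^ 2 / (2 * α) := by
  have h := integral_bergmanMeasure_comp_mul hα (w := Complex.I) (by simp)
    fun z => inner ℝ z t ^ 2
  have hI : ∀ z : ℂ, inner ℝ (Complex.I * z) t ^ 2 = ‖t‖ ^ 2 * ‖z‖ ^ 2 - inner ℝ z t ^ 2 := by
    intro z
    simp only [Complex.inner, Complex.sq_norm, Complex.normSq_apply]
    simp
    ring
  have hn : Integrable (fun z : ℂ => ‖z‖ ^ 2) (bergmanMeasure α) := by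
    apply Integrable.of_integral_ne_zero
    rw [integral_norm_sq_bergmanMeasure hα]
    positivity
  simp only [hI] at h
  rw [integral_sub (hn.const_mul _) (integrable_inner_sq_bergmanMeasure hα t),
    integral_const_mul, integral_norm_sq_bergmanMeasure hα] at h
  have : α ≠ 0 := by linarith
  field_simp at h ⊢
  linarith

/-- The centered circular complex Gaussian measure with density `(α / π) exp (-α |z|²)`. -/
noncomputable def circularGaussian (α : ℝ) : Measure ℂ :=
  volume.withDensity fun z => ENNReal.ofReal (α / Real.pi * Real.exp (-α * ‖z‖ ^ 2))

lemma integral_circularGaussian {E : Type*} [NormedAddCommGroup E] [NormedSpace ℝ E] {α : ℝ}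
    (hα : 0 < α) (f : ℂ → E) :
    ∫ z, f z ∂(circularGaussian α) =
      ∫ z : ℂ, (α / Real.pi * Real.exp (-α * ‖z‖ ^ 2)) • f z := by
  rw [circularGaussian, integral_withDensity_eq_integral_toReal_smul
    (by fun_prop) (by simp)]
  congr 1
  ext z
  rw [ENNReal.toReal_ofReal (by positivity)]

lemma integral_norm_rpow_circularGaussian {α r : ℝ} (hα : 0 < α) (hr : 0 ≤ r) :
    ∫ z, ‖z‖ ^ r ∂(circularGaussian α) = α ^ (-(r / 2)) * Real.Gamma (r / 2 + 1) := by
  have h := Complex.integral_rpow_mul_exp_neg_mul_rpow (p := 2) (q := r) (b := α)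
    (by norm_num) (by linarith) hα
  rw [integral_circularGaussian hα]
  calc _ = α / Real.pi * ∫ z : ℂ, ‖z‖ ^ r * Real.exp (-α * ‖z‖ ^ (2 : ℝ)) := by
        rw [← integral_const_mul]
        congr 1
        ext z
        rw [Real.rpow_two, smul_eq_mul]
        ring
    _ = _ := by
        rw [h, show -(r + 2) / 2 = -(r / 2) - 1 by ring, Real.rpow_sub_one hα.ne',
          show (r + 2) / 2 = r / 2 + 1 by ring]
        have := Real.pi_ne_zero
        field_simp

lemma isProbabilityMeasure_circularGaussian {α : ℝ} (hα : 0 < α) :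
    IsProbabilityMeasure (circularGaussian α) := by
  have h := integral_norm_rpow_circularGaussian hα le_rfl
  constructor
  rw [← ENNReal.toReal_eq_one_iff]
  simpa [Measure.real] using h

lemma integrable_norm_rpow_circularGaussian {α r : ℝ} (hα : 0 < α) (hr : 0 ≤ r) :
    Integrable (fun z : ℂ => ‖z‖ ^ r) (circularGaussian α) := by
  apply Integrable.of_integral_ne_zero
  rw [integral_norm_rpow_circularGaussian hα hr]
  have := Real.Gamma_pos_of_pos (show 0 < r / 2 + 1 by positivity)
  positivity

lemma charFun_circularGaussian {α : ℝ} (hα : 0 < α) (t : ℂ) :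
    charFun (circularGaussian α) t = Complex.exp (-(‖t‖ ^ 2 / (4 * α))) := by
  have h := GaussianFourier.integral_cexp_neg_mul_sq_norm_add (V := ℂ) (b := α)
    (by simpa using hα) Complex.I t
  have hα' : (α : ℂ) ≠ 0 := by exact_mod_cast hα.ne'
  have hpi : (Real.pi : ℂ) ≠ 0 := by exact_mod_cast Real.pi_ne_zero
  rw [charFun_apply, integral_circularGaussian hα]
  calc _ = (α / Real.pi : ℂ) *
        ∫ v : ℂ, Complex.exp (-(α : ℂ) * ‖v‖ ^ 2 + Complex.I * inner ℝ t v) := by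
        rw [← integral_const_mul]
        congr 1
        ext z
        rw [Complex.real_smul, Complex.exp_add, real_inner_comm, mul_comm Complex.I]
        push_cast
        ring
    _ = _ := by
        rw [h, Complex.finrank_real_complex, Complex.I_sq]
        simp only [Nat.cast_ofNat, ne_eq, OfNat.ofNat_ne_zero, not_false_eq_true, div_self,
          Complex.cpow_one]
        rw [← mul_assoc, div_mul_div_cancel₀ hpi, div_self hα', one_mul]
        congr 1
        ring

/-- The normalized sum `n^{-1/2} ∑ᵢ zᵢ`. -/
noncomputable def normalizedSum (n : ℕ) (z : Fin n → ℂ) : ℂ :=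
  ((Real.sqrt n)⁻¹ : ℂ) * ∑ i, z i

lemma measurable_normalizedSum (n : ℕ) : Measurable (normalizedSum n) := by
  unfold normalizedSum
  fun_prop

lemma inner_normalizedSum (n : ℕ) (z : Fin n → ℂ) (t : ℂ) :
    inner ℝ (normalizedSum n z) t = ∑ i, (Real.sqrt n)⁻¹ * inner ℝ (z i) t := by
  rw [normalizedSum, ← Complex.ofReal_inv, ← Complex.real_smul, real_inner_smul_left, sum_inner,
    Finset.mul_sum]

lemma isProbabilityMeasure_bergmanMeasurePi {α : ℝ} (hα : 1 < α) (n : ℕ) :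
    IsProbabilityMeasure (bergmanMeasurePi n α) := by
  have := isProbabilityMeasure_bergmanMeasure hα
  unfold bergmanMeasurePi
  infer_instance

lemma charFun_map_normalizedSum {α : ℝ} (hα : 1 < α) (n : ℕ) (t : ℂ) :
    charFun ((bergmanMeasurePi n α).map (normalizedSum n)) t =
      (∫ z, Complex.exp (((Real.sqrt n)⁻¹ * inner ℝ z t : ℝ) * Complex.I)
        ∂(bergmanMeasure α)) ^ n := by
  have := isProbabilityMeasure_bergmanMeasure hα
  rw [charFun_apply, integral_map (measurable_normalizedSum n).aemeasurable
    (by fun_prop), bergmanMeasurePi]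
  simp_rw [inner_normalizedSum, Complex.ofReal_sum, Finset.sum_mul, Complex.exp_sum]
  rw [integral_fintype_prod_eq_pow (ι := Fin n)
    (fun z : ℂ => Complex.exp (((Real.sqrt n)⁻¹ * inner ℝ z t : ℝ) * Complex.I)), Fintype.card_fin]

lemma tendsto_charFun_map_normalizedSum {α : ℝ} (hα : 1 < α) (t : ℂ) :
    Tendsto (fun n => charFun ((bergmanMeasurePi n α).map (normalizedSum n)) t) atTop
      (𝓝 (charFun (circularGaussian α) t)) := by
  have := isProbabilityMeasure_bergmanMeasure hα
  have hα0 : 0 < α := by linarith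
  rw [charFun_circularGaussian hα0]
  simp_rw [charFun_map_normalizedSum hα]
  rcases eq_or_ne t 0 with rfl | ht
  · simp
  set c : ℝ := ‖t‖ / Real.sqrt (2 * α) with hc
  have hc0 : c ≠ 0 := by have := norm_pos_iff.2 ht; positivity
  have hc2 : c ^ 2 = ‖t‖ ^ 2 / (2 * α) := by
    rw [hc, div_pow, Real.sq_sqrt (by positivity)]
  let X : ℂ → ℝ := fun z => c⁻¹ * inner ℝ z t
  have hX : Measurable X := by fun_prop
  have h := ProbabilityTheory.tendsto_charFun_inv_sqrt_mul_pow (P := bergmanMeasure α) (X := X)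
    hX.aemeasurable ?_ ?_ c
  · convert h using 2 with n
    · congr 1
      rw [charFun_apply_real, integral_map hX.aemeasurable (by fun_prop)]
      congr 1
      ext z
      congr 2
      simp only [X]
      rw [← Complex.ofReal_mul]
      congr 1
      field_simp
    · rw [← Complex.ofReal_pow c, hc2]
      congr 1
      push_cast
      ring
  · simp only [X]
    rw [integral_const_mul, integral_inner_bergmanMeasure hα, mul_zero]
  · simp only [X, Pi.pow_apply, mul_pow]
    rw [integral_const_mul, integral_inner_sq_bergmanMeasure hα, ← hc2, ← mul_pow,
      inv_mul_cancel₀ hc0, one_pow]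

lemma integral_exp_inner_bergmanMeasure_bounds {α : ℝ} (hα : 1 < α) {n : ℕ} (hn : n ≠ 0)
    {t : ℂ} (ht : ‖t‖ = 1) :
    0 < ∫ z, Real.exp ((Real.sqrt n)⁻¹ * inner ℝ z t) ∂(bergmanMeasure α) ∧
      ∫ z, Real.exp ((Real.sqrt n)⁻¹ * inner ℝ z t) ∂(bergmanMeasure α) ≤ 1 + 1 / n := by
  have := isProbabilityMeasure_bergmanMeasure hα
  have hn1 : (1 : ℝ) ≤ n := by exact_mod_cast Nat.one_le_iff_ne_zero.2 hn
  have hs : (Real.sqrt n)⁻¹ ≤ 1 := inv_le_one_of_one_le₀ (Real.one_le_sqrt.2 hn1)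
  have hae : ∀ᵐ z ∂(bergmanMeasure α), |(Real.sqrt n)⁻¹ * inner ℝ z t| ≤ 1 := by
    filter_upwards [ae_norm_lt_one_bergmanMeasure α] with z hz
    have h1 : |inner ℝ z t| ≤ 1 := by
      simpa [ht] using (abs_real_inner_le_norm z t).trans (mul_le_mul_of_nonneg_right hz.le
        (norm_nonneg t))
    rw [abs_mul, abs_of_nonneg (by positivity)]
    exact mul_le_one₀ hs (abs_nonneg _) h1
  have hexp : Integrable (fun z : ℂ => Real.exp ((Real.sqrt n)⁻¹ * inner ℝ z t))
      (bergmanMeasure α) := by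
    refine Integrable.of_bound (by fun_prop) (Real.exp 1) ?_
    filter_upwards [hae] with z hz
    rw [Real.norm_of_nonneg (Real.exp_pos _).le]
    exact Real.exp_le_exp.2 (le_of_abs_le hz)
  have hlin : Integrable (fun z : ℂ => (Real.sqrt n)⁻¹ * inner ℝ z t) (bergmanMeasure α) := by
    refine Integrable.of_bound (by fun_prop) 1 ?_
    filter_upwards [hae] with z hz using hz
  have haff : Integrable (fun z : ℂ => 1 + (Real.sqrt n)⁻¹ * inner ℝ z t) (bergmanMeasure α) :=
    (integrable_const 1).add hlin
  have hsq := (integrable_inner_sq_bergmanMeasure hα t).const_mul ((Real.sqrt n)⁻¹ ^ 2)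
  refine ⟨integral_exp_pos hexp, ?_⟩
  calc _ ≤ ∫ z, (1 + (Real.sqrt n)⁻¹ * inner ℝ z t + (Real.sqrt n)⁻¹ ^ 2 * inner ℝ z t ^ 2)
        ∂(bergmanMeasure α) := by
        refine integral_mono_ae hexp (haff.add hsq) ?_
        filter_upwards [hae] with z hz
        have := le_of_abs_le (Real.abs_exp_sub_one_sub_id_le hz)
        rw [← mul_pow]
        linarith
    _ = 1 + (Real.sqrt n)⁻¹ ^ 2 * (1 / (2 * α)) := by
        rw [integral_add haff hsq, integral_add (integrable_const 1) hlin,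
          integral_const_mul, integral_const_mul, integral_inner_bergmanMeasure hα,
          integral_inner_sq_bergmanMeasure hα, ht]
        simp
    _ ≤ 1 + 1 / n := by
        rw [inv_pow, Real.sq_sqrt (by positivity), one_div (n : ℝ)]
        have : 1 / (2 * α) ≤ 1 := by rw [div_le_one (by linarith)]; linarith
        have h0 : (0 : ℝ) ≤ (n : ℝ)⁻¹ := by positivity
        nlinarith

/-- The exponential moments of the normalized sums are uniformly bounded. -/
lemma integral_exp_inner_normalizedSum {α : ℝ} (hα : 1 < α) (n : ℕ) {t : ℂ} (ht : ‖t‖ = 1) :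
    Integrable (fun z => Real.exp (inner ℝ (normalizedSum n z) t)) (bergmanMeasurePi n α) ∧
      ∫ z, Real.exp (inner ℝ (normalizedSum n z) t) ∂(bergmanMeasurePi n α) ≤ Real.exp 1 := by
  have := isProbabilityMeasure_bergmanMeasure hα
  have key : ∫ z, Real.exp (inner ℝ (normalizedSum n z) t) ∂(bergmanMeasurePi n α) =
      (∫ z, Real.exp ((Real.sqrt n)⁻¹ * inner ℝ z t) ∂(bergmanMeasure α)) ^ n := by
    simp_rw [inner_normalizedSum, Real.exp_sum, bergmanMeasurePi]
    rw [integral_fintype_prod_eq_pow (ι := Fin n)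
      (fun z : ℂ => Real.exp ((Real.sqrt n)⁻¹ * inner ℝ z t)), Fintype.card_fin]
  rcases eq_or_ne n 0 with rfl | hn
  · rw [pow_zero] at key
    refine ⟨.of_integral_ne_zero (by rw [key]; exact one_ne_zero), ?_⟩
    rw [key]
    exact Real.one_le_exp zero_le_one
  · obtain ⟨h0, h1⟩ := integral_exp_inner_bergmanMeasure_bounds hα hn ht
    refine ⟨.of_integral_ne_zero (by rw [key]; positivity), ?_⟩
    rw [key]
    calc _ ≤ (1 + 1 / (n : ℝ)) ^ n := by gcongr
      _ ≤ Real.exp (1 / (n : ℝ)) ^ n := by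
        gcongr
        rw [add_comm]
        exact Real.add_one_le_exp _
      _ = Real.exp 1 := by
        rw [← Real.exp_nat_mul]
        congr 1
        field_simp

lemma exists_norm_rpow_le_sum_exp_inner (s : ℝ) (hs : 0 ≤ s) : ∃ K : ℝ, 0 ≤ K ∧ ∀ z : ℂ,
    ‖z‖ ^ s ≤ K * (Real.exp (inner ℝ z 1) + Real.exp (inner ℝ z (-1)) +
      Real.exp (inner ℝ z Complex.I) + Real.exp (inner ℝ z (-Complex.I))) := by
  obtain ⟨k, hk⟩ := exists_nat_ge s
  refine ⟨1 + k.factorial * 2 ^ k, by positivity, fun z => ?_⟩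
  have hr := norm_nonneg z
  set r := ‖z‖ with hrdef
  have h1 : r ^ s ≤ 1 + r ^ k := by
    rcases le_total r 1 with h | h
    · have := Real.rpow_le_one hr h hs
      have : 0 ≤ r ^ k := by positivity
      linarith
    · have := Real.rpow_le_rpow_of_exponent_le h hk
      rw [Real.rpow_natCast] at this
      linarith
  have h2 : r ^ k ≤ k.factorial * 2 ^ k * Real.exp (r / 2) := by
    have := Real.pow_div_factorial_le_exp (r / 2) (by positivity) k
    rw [div_le_iff₀ (by positivity), div_pow, div_le_iff₀ (by positivity)] at this
    linarith
  have h3 : 1 ≤ Real.exp (r / 2) := Real.one_le_exp (by positivity)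
  have h4 : Real.exp (r / 2) ≤ Real.exp (inner ℝ z 1) + Real.exp (inner ℝ z (-1)) +
      Real.exp (inner ℝ z Complex.I) + Real.exp (inner ℝ z (-Complex.I)) := by
    have hre : inner ℝ z 1 = z.re := by simp [Complex.inner]
    have him : inner ℝ z Complex.I = z.im := by simp [Complex.inner]
    rw [inner_neg_right, inner_neg_right, hre, him]
    have habs := Complex.norm_le_abs_re_add_abs_im z
    have e1 := Real.exp_pos z.re
    have e2 := Real.exp_pos (-z.re)
    have e3 := Real.exp_pos z.im
    have e4 := Real.exp_pos (-z.im)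
    have hx := Real.exp_abs_le z.re
    have hy := Real.exp_abs_le z.im
    rcases le_total |z.re| |z.im| with h | h
    · have := Real.exp_le_exp.2 (show r / 2 ≤ |z.im| by linarith)
      linarith
    · have := Real.exp_le_exp.2 (show r / 2 ≤ |z.re| by linarith)
      linarith
  have h5 : (0 : ℝ) ≤ k.factorial * 2 ^ k := by positivity
  calc r ^ s ≤ (1 + k.factorial * 2 ^ k) * Real.exp (r / 2) := by nlinarith
    _ ≤ _ := by gcongr

/-- The absolute moments of the normalized sums are uniformly bounded. -/
lemma exists_integral_norm_normalizedSum_rpow_le {α s : ℝ} (hα : 1 < α) (hs : 0 ≤ s) :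
    ∃ C : ℝ, ∀ n, Integrable (fun z => ‖normalizedSum n z‖ ^ s) (bergmanMeasurePi n α) ∧
      ∫ z, ‖normalizedSum n z‖ ^ s ∂(bergmanMeasurePi n α) ≤ C := by
  obtain ⟨K, hK, hbound⟩ := exists_norm_rpow_le_sum_exp_inner s hs
  refine ⟨K * (4 * Real.exp 1), fun n => ?_⟩
  obtain ⟨i1, b1⟩ := integral_exp_inner_normalizedSum hα n (t := 1) (by simp)
  obtain ⟨i2, b2⟩ := integral_exp_inner_normalizedSum hα n (t := -1) (by simp)
  obtain ⟨i3, b3⟩ := integral_exp_inner_normalizedSum hα n (t := Complex.I) (by simp)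
  obtain ⟨i4, b4⟩ := integral_exp_inner_normalizedSum hα n (t := -Complex.I) (by simp)
  have hi := (((i1.add i2).add i3).add i4).const_mul K
  have hmeas := (measurable_normalizedSum n).norm.pow_const s
  have hint : Integrable (fun z => ‖normalizedSum n z‖ ^ s) (bergmanMeasurePi n α) := by
    refine hi.mono' hmeas.aestronglyMeasurable (.of_forall fun z => ?_)
    rw [Real.norm_of_nonneg (by positivity)]
    exact hbound _
  refine ⟨hint, (integral_mono hint hi fun z => hbound (normalizedSum n z)).trans ?_⟩
  rw [integral_const_mul, integral_add' ((i1.add i2).add i3) i4, integral_add' (i1.add i2) i3,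
    integral_add' i1 i2]
  gcongr
  linarith

lemma tendsto_integral_norm_normalizedSum_rpow {α r : ℝ} (hα : 1 < α) (hr : 0 ≤ r) :
    Tendsto (fun n => ∫ z, ‖normalizedSum n z‖ ^ r ∂(bergmanMeasurePi n α)) atTop
      (𝓝 (α ^ (-(r / 2)) * Real.Gamma (r / 2 + 1))) := by
  have hα0 : 0 < α := by linarith
  have hprob := isProbabilityMeasure_bergmanMeasurePi hα
  have hmap : ∀ n, IsProbabilityMeasure ((bergmanMeasurePi n α).map (normalizedSum n)) :=
    fun n => Measure.isProbabilityMeasure_map (measurable_normalizedSum n).aemeasurable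
  let ν : ℕ → ProbabilityMeasure ℂ := fun n =>
    ⟨(bergmanMeasurePi n α).map (normalizedSum n), hmap n⟩
  let ν₀ : ProbabilityMeasure ℂ :=
    ⟨circularGaussian α, isProbabilityMeasure_circularGaussian hα0⟩
  have hν : Tendsto ν atTop (𝓝 ν₀) :=
    ProbabilityMeasure.tendsto_iff_tendsto_charFun.2 (tendsto_charFun_map_normalizedSum hα)
  have hcont : Continuous fun z : ℂ => ‖z‖ ^ r :=
    continuous_norm.rpow_const fun _ => Or.inr hr
  have hsq : ∀ z : ℂ, (‖z‖ ^ r) ^ 2 = ‖z‖ ^ (r * 2) := fun z => by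
    rw [Real.rpow_mul (norm_nonneg z), Real.rpow_two]
  obtain ⟨C, hC⟩ := exists_integral_norm_normalizedSum_rpow_le (s := r * 2) hα (by positivity)
  have hsm : ∀ (s : ℝ) (μ : Measure ℂ), AEStronglyMeasurable (fun z : ℂ => ‖z‖ ^ s) μ :=
    fun s μ => (measurable_norm.pow_const s).aestronglyMeasurable
  have h := tendsto_integral_of_tendsto_of_integral_sq_le hν hcont (fun z => by positivity)
    (C := max C (∫ z, ‖z‖ ^ (r * 2) ∂(circularGaussian α))) ?_ ?_ ?_ ?_
  · rw [← integral_norm_rpow_circularGaussian hα0 hr]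
    refine h.congr fun n => ?_
    exact integral_map (measurable_normalizedSum n).aemeasurable (hsm r _)
  · intro n
    simp_rw [hsq]
    exact (integrable_map_measure (hsm _ _) (measurable_normalizedSum n).aemeasurable).2 (hC n).1
  · simp_rw [hsq]
    exact integrable_norm_rpow_circularGaussian hα0 (by positivity)
  · intro n
    simp_rw [hsq]
    refine le_trans (le_of_eq ?_) ((hC n).2.trans (le_max_left _ _))
    exact integral_map (measurable_normalizedSum n).aemeasurable (hsm _ _)
  · simp_rw [hsq]
    exact le_max_right _ _

/-- The limiting ratio of the Bergman norms of powers of `p_{1,n}(𝐳) = n^{-1/2} ∑ᵢ zᵢ`: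
`lim_{n→∞} ‖p_{1,n}^m‖_{A_β^q(𝔻ⁿ)} / ‖p_{1,n}^m‖_{A_α^p(𝔻ⁿ)}
  = (√(α/β))^m · Γ(qm/2+1)^{1/q} / Γ(pm/2+1)^{1/p}`. -/
theorem norm_ratio_limit
    (m : ℕ) (hm : 0 < m) (p q α β : ℝ) (hp : 0 < p) (hq : 0 < q)
    (hα : 1 < α) (hβ : 1 < β) :
    Tendsto
      (fun n : ℕ =>
        ((∫ z : Fin n → ℂ,
            ‖((Real.sqrt n)⁻¹ : ℂ) * ∑ i, z i‖ ^ ((m : ℝ) * q)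
          ∂(bergmanMeasurePi n β)) ^ (1 / q)) /
        ((∫ z : Fin n → ℂ,
            ‖((Real.sqrt n)⁻¹ : ℂ) * ∑ i, z i‖ ^ ((m : ℝ) * p)
          ∂(bergmanMeasurePi n α)) ^ (1 / p)))
      atTop
      (nhds (Real.sqrt (α / β) ^ m *
        (Real.Gamma (q * m / 2 + 1) ^ (1 / q) / Real.Gamma (p * m / 2 + 1) ^ (1 / p)))) := by
  have key : ∀ r a : ℝ, 0 < r → 1 < a → Tendsto (fun n : ℕ =>
      (∫ z : Fin n → ℂ, ‖((Real.sqrt n)⁻¹ : ℂ) * ∑ i, z i‖ ^ ((m : ℝ) * r)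
        ∂(bergmanMeasurePi n a)) ^ (1 / r)) atTop
      (𝓝 ((Real.sqrt a)⁻¹ ^ m * Real.Gamma (r * m / 2 + 1) ^ (1 / r))) := by
    intro r a hr ha
    have ha0 : 0 < a := by linarith
    have hG := Real.Gamma_pos_of_pos (show 0 < r * m / 2 + 1 by positivity)
    have h := (tendsto_integral_norm_normalizedSum_rpow (r := m * r) ha (by positivity)).rpow_const
      (p := 1 / r) (Or.inr (by positivity))
    suffices heq : (Real.sqrt a)⁻¹ ^ m * Real.Gamma (r * m / 2 + 1) ^ (1 / r) =
        (a ^ (-(m * r / 2)) * Real.Gamma (m * r / 2 + 1)) ^ (1 / r) by rw [heq]; exact h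
    rw [mul_comm (m : ℝ) r, Real.mul_rpow (by positivity) hG.le, ← Real.rpow_mul ha0.le,
      Real.sqrt_eq_rpow, ← Real.rpow_neg ha0.le, ← Real.rpow_mul_natCast ha0.le]
    congr 2
    field_simp
  have hGp := Real.Gamma_pos_of_pos (show 0 < p * m / 2 + 1 by positivity)
  have hα0 : 0 < α := by linarith
  have hβ0 : 0 < β := by linarith
  have h := (key q β hq hβ).div (key p α hp hα) (by positivity)
  suffices heq : Real.sqrt (α / β) ^ m *
      (Real.Gamma (q * m / 2 + 1) ^ (1 / q) / Real.Gamma (p * m / 2 + 1) ^ (1 / p)) =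
      (Real.sqrt β)⁻¹ ^ m * Real.Gamma (q * m / 2 + 1) ^ (1 / q) /
        ((Real.sqrt α)⁻¹ ^ m * Real.Gamma (p * m / 2 + 1) ^ (1 / p)) by rw [heq]; exact h
  rw [Real.sqrt_div hα0.le, div_pow, inv_pow, inv_pow]
  field_simp
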